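/- For all real x > 0, ln(x + 1/2) - 1/x < ψ(x) < ln(x + e^{-γ}) - 1/x, where ψ is the digamma function and γ is the Euler–Mascheroni constant. -/

import Mathlib

/-- The digamma function ψ = Γ'/Γ, as the derivative of log ∘ Γ. -/
noncomputable def digamma (x : ℝ) : ℝ := deriv (fun y => Real.log (Real.Gamma y)) x

open Real Set Filter Topology

lemma qg_pos_of_anti (a : ℕ → ℝ) (C c : ℝ) (hc : 0 < c) (h : ∀ n, a (n+1) < a n)
    (hb : ∀ n : ℕ, |a n| ≤ C / (c + n)) : 0 < a 0 := by
  have hs : StrictAnti a := strictAnti_nat_of_succ_lt h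
  have hl : Tendsto a atTop (𝓝 0) := by
    apply squeeze_zero_norm hb
    exact tendsto_const_nhds.div_atTop (tendsto_atTop_add_const_left _ _ tendsto_natCast_atTop_atTop)
  have h1 : 0 ≤ a 1 := hs.antitone.le_of_tendsto hl 1
  exact h1.trans_lt (h 0)

lemma qg_diff {x : ℝ} (hx : 0 < x) : DifferentiableAt ℝ (fun y => log (Gamma y)) x := by
  refine ((differentiableAt_Gamma ?_).log (Gamma_ne_zero ?_)) <;>
    exact fun m ↦ ne_of_gt (by have : (0:ℝ) ≤ m := m.cast_nonneg
                               linarith)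

lemma qg_feq {x : ℝ} (hx : 0 < x) : log (Gamma (x+1)) = log (Gamma x) + log x := by
  rw [Gamma_add_one hx.ne', log_mul hx.ne' (Gamma_pos_of_pos hx).ne', add_comm]

lemma qg_rec {x : ℝ} (hx : 0 < x) : digamma (x+1) = digamma x + 1/x := by
  unfold digamma
  rw [← deriv_comp_add_const, one_div, ← Real.deriv_log,
      ← deriv_add (qg_diff hx) (differentiableAt_log hx.ne')]
  apply EventuallyEq.deriv_eq
  filter_upwards [eventually_gt_nhds hx] with y hy using qg_feq hy

lemma qg_lb {x : ℝ} (hx : 0 < x) : log x ≤ digamma (x+1) := by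
  have hc : ConvexOn ℝ (Ioi 0) (fun y => log (Gamma y)) := convexOn_log_Gamma
  have := hc.slope_le_deriv (mem_Ioi.mpr hx) (by positivity : 0 < x + 1) (by linarith)
    (qg_diff (by positivity))
  rw [slope_def_field, qg_feq hx] at this
  simpa [digamma] using this

lemma qg_ub {x : ℝ} (hx : 0 < x) : digamma x ≤ log x := by
  have hc : ConvexOn ℝ (Ioi 0) (fun y => log (Gamma y)) := convexOn_log_Gamma
  have := hc.deriv_le_slope (mem_Ioi.mpr hx) (by positivity : 0 < x + 1) (by linarith)
    (qg_diff hx)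
  rw [slope_def_field, qg_feq hx] at this
  simpa [digamma] using this

lemma qg_one : digamma 1 = -eulerMascheroniConstant := by
  unfold digamma
  have := (hasDerivAt_Gamma_one.log (by simp)).deriv
  simpa using this

/-- `log t > 2 (t-1)/(t+1)` in the form needed. -/
lemma qg_log1 {x : ℝ} (hx : 0 < x) : 1/(x+1) < log (x+1+1/2) - log (x+1/2) := by
  have hd : ∀ t : ℝ, 0 < t → HasDerivAt (fun t : ℝ => log t - 2 * (t-1)/(t+1))
      (1/t - (2*(t+1) - 2*(t-1))/(t+1)^2) t := by
    intro t ht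
    have h1 : HasDerivAt (fun t : ℝ => 2*(t-1)) 2 t := by
      simpa using ((hasDerivAt_id t).sub_const 1).const_mul 2
    have h2 : HasDerivAt (fun t : ℝ => t+1) 1 t := (hasDerivAt_id t).add_const 1
    have := (hasDerivAt_log ht.ne').sub (h1.div h2 (by positivity))
    refine HasDerivAt.congr_deriv this ?_
    simp
  have hm : StrictMonoOn (fun t : ℝ => log t - 2 * (t-1)/(t+1)) (Ici 1) := by
    apply strictMonoOn_of_deriv_pos (convex_Ici 1)
    · intro t ht
      have : (0:ℝ) < t := lt_of_lt_of_le one_pos ht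
      exact (hd t this).continuousAt.continuousWithinAt
    · intro t ht
      simp only [interior_Ici, mem_Ioi] at ht
      rw [(hd t (by linarith)).deriv]
      have : 1/t - (2*(t+1) - 2*(t-1))/(t+1)^2 = (t-1)^2/(t*(t+1)^2) := by
        have : t ≠ 0 := by linarith
        have : t + 1 ≠ 0 := by linarith
        field_simp
        ring
      rw [this]
      have : 0 < t - 1 := by linarith
      positivity
  have ht : 1 < (x+1+1/2)/(x+1/2) := by
    rw [one_lt_div (by positivity)]; linarith
  have := hm (mem_Ici.2 le_rfl) (mem_Ici.2 ht.le) ht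
  simp only [log_one] at this
  rw [log_div (by positivity) (by positivity)] at this
  have e : 2 * ((x+1+1/2)/(x+1/2) - 1)/((x+1+1/2)/(x+1/2)+1) = 1/(x+1) := by
    field_simp
    ring
  rw [e] at this
  norm_num at this ⊢
  linarith

lemma qg_log2 {x : ℝ} (hx : 0 < x) : log (x+1) - log x < (1/x + 1/(x+1))/2 := by
  have hd : ∀ t : ℝ, 0 < t → HasDerivAt (fun t : ℝ => (t - t⁻¹)/2 - log t)
      ((1 + (t^2)⁻¹)/2 - t⁻¹) t := by
    intro t ht
    have := (((hasDerivAt_id t).sub (hasDerivAt_inv ht.ne')).div_const 2).sub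
      (hasDerivAt_log ht.ne')
    refine HasDerivAt.congr_deriv this ?_
    simp
  have hm : StrictMonoOn (fun t : ℝ => (t - t⁻¹)/2 - log t) (Ici 1) := by
    apply strictMonoOn_of_deriv_pos (convex_Ici 1)
    · intro t ht
      have : (0:ℝ) < t := lt_of_lt_of_le one_pos ht
      exact (hd t this).continuousAt.continuousWithinAt
    · intro t ht
      simp only [interior_Ici, mem_Ioi] at ht
      rw [(hd t (by linarith)).deriv]
      have : (1 + (t^2)⁻¹)/2 - t⁻¹ = (t-1)^2/(2*t^2) := by
        have : t ≠ 0 := by linarith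
        field_simp
        ring
      rw [this]
      have : 0 < t - 1 := by linarith
      positivity
  have ht : 1 < (x+1)/x := by
    rw [one_lt_div (by positivity)]; linarith
  have := hm (mem_Ici.2 le_rfl) (mem_Ici.2 ht.le) ht
  simp only [log_one] at this
  rw [log_div (by positivity) (by positivity)] at this
  have e : ((x+1)/x - ((x+1)/x)⁻¹)/2 = (1/x + 1/(x+1))/2 := by
    field_simp
    ring
  rw [e] at this
  norm_num at this ⊢
  linarith

lemma qg_lower {x : ℝ} (hx : 0 < x) : log (x+1/2) < digamma (x+1) := by
  have := qg_pos_of_anti (fun n => digamma (x+n+1) - log (x+n+1/2)) 1 x hx ?_ ?_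
  · simp only [Nat.cast_zero, add_zero] at this
    linarith
  · intro n
    have hz : 0 < x + n := by positivity
    have h1 := qg_log1 hz
    have h2 := qg_rec (x := x+n+1) (by positivity)
    push_cast
    rw [← add_assoc x n 1, h2]
    linarith
  · intro n
    have hz : 0 < x + n := by positivity
    generalize x + (n:ℝ) = z at *
    have h1 := qg_lb hz
    have h2 := qg_ub (x := z+1) (by positivity)
    have h3 : log (z+1/2) ≤ log z + 1/z := by
      have := log_le_sub_one_of_pos (x := (z+1/2)/z) (by positivity)
      rw [log_div (by positivity) (by positivity)] at this
      have e : (z+1/2)/z - 1 = 1/z/2 := by field_simp; ring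
      have : 0 < 1/z := by positivity
      linarith
    have h4 : log (z+1) ≤ log z + 1/z := by
      have := log_le_sub_one_of_pos (x := (z+1)/z) (by positivity)
      rw [log_div (by positivity) (by positivity)] at this
      have e : (z+1)/z - 1 = 1/z := by field_simp; ring
      linarith
    have h5 : log z ≤ log (z+1/2) := log_le_log hz (by linarith)
    rw [abs_le]
    constructor <;> linarith

lemma qg_upper' {x : ℝ} (hx : 0 < x) : digamma x < log x - 1/(2*x) := by
  have := qg_pos_of_anti (fun n => log (x+n) - 1/(2*(x+n)) - digamma (x+n)) 2 x hx ?_ ?_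
  · simp only [Nat.cast_zero, add_zero] at this
    linarith
  · intro n
    have hz : 0 < x + n := by positivity
    have h1 := qg_log2 hz
    have h2 := qg_rec hz
    push_cast
    rw [← add_assoc x n 1, h2]
    generalize x + (n:ℝ) = z at *
    have e1 : 1/(2*z) = 1/z/2 := by field_simp
    have e2 : 1/(2*(z+1)) = 1/(z+1)/2 := by field_simp
    rw [e1, e2]
    linarith
  · intro n
    have hz : 0 < x + n := by positivity
    generalize x + (n:ℝ) = z at *
    have h1 := qg_lb hz
    rw [qg_rec hz] at h1
    have h2 := qg_ub hz
    have e1 : 1/(2*z) = 1/z/2 := by field_simp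
    have e2 : 2/z = 2*(1/z) := by field_simp
    have : 0 < 1/z := by positivity
    rw [e1, e2, abs_le]
    constructor <;> linarith

lemma qg_B_upper {u : ℝ} (h0 : 0 < u) (h1 : u ≤ 1) :
    u/(exp u - 1) ≤ 1 - u/2 + u^2/12 := by
  have h := sum_le_exp_of_nonneg h0.le 6
  simp [Finset.sum_range_succ, Nat.factorial] at h
  have hp : 0 < exp u - 1 := by have := add_one_lt_exp h0.ne'; linarith
  rw [div_le_iff₀ hp]
  have hq : 0 ≤ 1 - u/2 + u^2/12 := by nlinarith
  have : (1 - u/2 + u^2/12) * (u + u^2/2+u^3/6+u^4/24+u^5/120) ≤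
    (1 - u/2 + u^2/12) * (exp u - 1) := mul_le_mul_of_nonneg_left (by linarith) hq
  have e : (1 - u/2 + u^2/12) * (u + u^2/2+u^3/6+u^4/24+u^5/120) =
    u + u^5*(2 - u + u^2)/1440 := by ring
  have : 0 ≤ u^5*(2 - u + u^2)/1440 := by
    have : 0 ≤ 2 - u + u^2 := by nlinarith
    positivity
  linarith

lemma qg_B_lower {u : ℝ} (h0 : 0 < u) (h1 : u ≤ 1) :
    1 - u/2 + u^2/12 - u^3/12 ≤ u/(exp u - 1) := by
  have h := exp_bound' h0.le h1 (n := 4) (by norm_num)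
  simp [Finset.sum_range_succ, Nat.factorial] at h
  have hp : 0 < exp u - 1 := by have := add_one_lt_exp h0.ne'; linarith
  rw [le_div_iff₀ hp]
  have hq : 0 ≤ 1 - u/2 + u^2/12 - u^3/12 := by nlinarith [pow_le_one₀ h0.le h1 (n := 3), sq_nonneg u]
  have h2 : (1 - u/2 + u^2/12 - u^3/12) * (exp u - 1) ≤ 
    (1 - u/2 + u^2/12- u^3/12) * (u + u^2/2+u^3/6+5*u^4/96) := 
      mul_le_mul_of_nonneg_left (by norm_num at h ⊢; linarith) hq
  have e : (1 - u/2 + u^2/12- u^3/12) * (u + u^2/2+u^3/6+5*u^4/96) =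
    u - u^4 * (7/96 + 31/576*u +  11/1152 *u^2 + 5/1152*u^3) := by ring
  have : 0 ≤ u^4 * (7/96 + 31/576*u +  11/1152 *u^2 + 5/1152*u^3) := by positivity
  linarith

noncomputable def qgM (y : ℝ) : ℝ := 1/y + log (exp (1/(y+1)) - 1) - log (exp (1/y) - 1)

lemma qg_M_anti : StrictAntiOn qgM (Ici 1) := by
  have hE : ∀ u : ℝ, 0 < u → 0 < exp u - 1 := fun u hu => by
    have := add_one_lt_exp hu.ne'; linarith
  have hL : ∀ y : ℝ, 0 < y → HasDerivAt (fun y : ℝ => log (exp (1/y) - 1))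
      (exp (1/y) * (-(1/y^2)) / (exp (1/y) - 1)) y := by
    intro y hy
    have h1 : HasDerivAt (fun y : ℝ => 1/y) (-(1/y^2)) y := by
      simpa using hasDerivAt_inv hy.ne'
    exact ((h1.exp).sub_const 1).log (hE _ (by positivity)).ne'
  have hd : ∀ y : ℝ, 0 < y → HasDerivAt qgM (-(1/y^2)
      + exp (1/(y+1)) * (-(1/(y+1)^2)) / (exp (1/(y+1)) - 1)
      - exp (1/y) * (-(1/y^2)) / (exp (1/y) - 1)) y := by
    intro y hy
    have h1 : HasDerivAt (fun y : ℝ => 1/y) (-(1/y^2)) y := by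
      simpa using hasDerivAt_inv hy.ne'
    exact (h1.add ((hL (y+1) (by positivity)).comp_add_const y 1)).sub (hL y hy)
  apply strictAntiOn_of_deriv_neg (convex_Ici 1)
  · intro t ht
    have : (0:ℝ) < t := lt_of_lt_of_le one_pos ht
    exact (hd t this).continuousAt.continuousWithinAt
  · intro y ht
    simp only [interior_Ici, mem_Ioi] at ht
    have hy : 0 < y := by linarith
    rw [(hd y hy).deriv]
    have b1 := qg_B_upper (u := 1/y) (by positivity) (by rw [div_le_one hy]; linarith)
    have b2 := qg_B_lower (u := 1/(y+1)) (by positivity)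
      (by rw [div_le_one (by positivity)]; linarith)
    have p1 := hE (1/y) (by positivity)
    have p2 := hE (1/(y+1)) (by positivity)
    have e : ∀ z : ℝ, 0 < z → 0 < exp (1/z) - 1 → exp (1/z) * (-(1/z^2)) / (exp (1/z) - 1)
        = -(1/z^2) - (1/z) * ((1/z) / (exp (1/z) - 1)) := by
      intro z hz hp
      have : exp (1/z) - 1 ≠ 0 := hp.ne'
      generalize exp (1/z) = E at *
      field_simp
      ring
    rw [e y hy p1, e (y+1) (by positivity) p2]
    have c1 := mul_le_mul_of_nonneg_left b1 (by positivity : 0 ≤ 1/y)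
    have c2 := mul_le_mul_of_nonneg_left b2 (by positivity : 0 ≤ 1/(y+1))
    have key : (1/y) * (1 - (1/y)/2 + (1/y)^2/12) <
      1/(y+1)^2 + (1/(y+1)) * (1 - (1/(y+1))/2 + (1/(y+1))^2/12 - (1/(y+1))^3/12) := by
      rw [← sub_pos]
      have : 1/(y+1)^2 + (1/(y+1)) * (1 - (1/(y+1))/2 + (1/(y+1))^2/12 - (1/(y+1))^3/12)
         - (1/y) * (1 - (1/y)/2 + (1/y)^2/12) =
         ((3*y^2+3*y-1)*(y+1) - y^3)/(12*y^3*(y+1)^4) := by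
        field_simp
        ring
      rw [this]
      apply div_pos _ (by positivity)
      nlinarith [pow_pos hy 3, pow_pos hy 2]
    linarith

noncomputable def qgK (y : ℝ) : ℝ := digamma y + log (exp (1/y) - 1)

lemma qg_K_rec {y : ℝ} (hy : 0 < y) : qgK (y+1) - qgK y = qgM y := by
  unfold qgK qgM
  rw [qg_rec hy]; ring

lemma qg_K_bound {z : ℝ} (hz : 0 < z) : |qgK z| ≤ 1/z := by
  have hu : 0 < 1/z := by positivity
  have hp : 0 < exp (1/z) - 1 := by have := add_one_lt_exp hu.ne'; linarith
  have h1 : -log z ≤ log (exp (1/z) - 1) := by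
    rw [← log_inv, ← one_div]
    exact log_le_log hu (by have := add_one_lt_exp hu.ne'; linarith)
  have h2 : log (exp (1/z) - 1) ≤ - log z + 1/z := by
    rw [← log_inv, ← one_div]
    nth_rewrite 3 [← log_exp (1/z)]
    rw [← log_mul (by positivity) (by positivity)]
    apply log_le_log hp
    have h := add_one_le_exp (-(1/z))
    have h' := mul_le_mul_of_nonneg_right h (exp_pos (1/z)).le
    rw [← exp_add] at h'
    simp only [neg_add_cancel, exp_zero] at h'
    linarith
  have h3 := qg_ub hz
  have h4 := qg_lb hz
  rw [qg_rec hz] at h4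
  unfold qgK
  rw [abs_le]
  constructor <;> linarith

lemma qg_K_mono {x y : ℝ} (hx : 1 ≤ x) (hxy : x < y) : qgK x < qgK y := by
  have := qg_pos_of_anti (fun n => qgK (y+n) - qgK (x+n)) 2 x (by linarith) ?_ ?_
  · simp only [Nat.cast_zero, add_zero] at this
    linarith
  · intro n
    have hn : (0:ℝ) ≤ n := n.cast_nonneg
    have h1 := qg_K_rec (y := y+n) (by linarith)
    have h2 := qg_K_rec (y := x+n) (by linarith)
    have h3 := qg_M_anti (a := x+n) (b := y+n) (mem_Ici.2 (by linarith))
      (mem_Ici.2 (by linarith)) (by linarith)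
    push_cast
    rw [← add_assoc x n 1, ← add_assoc y n 1]
    linarith
  · intro n
    have hn : (0:ℝ) ≤ n := n.cast_nonneg
    have h1 := abs_le.1 (qg_K_bound (z := y+n) (by linarith))
    have h2 := abs_le.1 (qg_K_bound (z := x+n) (by linarith))
    have h3 : 1/(y+n) ≤ 1/(x+n) := one_div_le_one_div_of_le (by linarith) (by linarith)
    have e2 : 2/(x+n) = 2*(1/(x+n)) := by ring
    rw [e2, abs_le]
    constructor <;> linarith [h1.1, h1.2, h2.1, h2.2]

lemma qg_exp_bound {z : ℝ} (hz : 0 < z) : |exp (digamma z) - z + 1/2| ≤ 1/z := by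
  have h1 := qg_upper' hz
  have h2 := qg_lower hz
  rw [qg_rec hz] at h2
  have hu : 0 < 1/z := by positivity
  have a1 : (z+1/2) * (1 - 1/z) ≤ exp (digamma z) := by
    have : exp (log (z+1/2) + -(1/z)) ≤ exp (digamma z) := exp_le_exp.2 (by linarith)
    rw [exp_add, exp_log (by positivity)] at this
    refine le_trans ?_ this
    apply mul_le_mul_of_nonneg_left _ (by positivity)
    linarith [add_one_le_exp (-(1/z))]
  have a2 : exp (digamma z) ≤ z / (1+1/(2*z)) := by
    have : exp (digamma z) ≤ exp (log z - 1/(2*z)) := exp_le_exp.2 (by linarith)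
    rw [exp_sub, exp_log hz] at this
    refine this.trans ?_
    apply div_le_div_of_nonneg_left hz.le (by positivity)
    linarith [add_one_le_exp (1/(2*z))]
  have e1 : (z+1/2) * (1 - 1/z) = z - 1/2 - 1/z/2 := by field_simp; ring
  have e2 : z / (1+1/(2*z)) ≤ z - 1/2 + 1/z := by
    rw [div_le_iff₀ (by positivity)]
    have : (z - 1/2 + 1/z) * (1+1/(2*z)) = z + (3/4)*(1/z) + (1/z)^2/2 := by field_simp; ring
    rw [this]
    have : 0 < (3/4)*(1/z) + (1/z)^2/2 := by positivity
    linarith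
  rw [abs_le]
  constructor <;> linarith

lemma qg_exp_rec {z : ℝ} (hz : 0 < z) :
    exp (digamma (z+1)) - exp (digamma z) = exp (qgK z) := by
  have hu : 0 < 1/z := by positivity
  have hp : 0 < exp (1/z) - 1 := by have := add_one_lt_exp hu.ne'; linarith
  unfold qgK
  rw [qg_rec hz, exp_add, exp_add, exp_log hp]; ring

lemma qg_exp_lt {x y : ℝ} (hx : 1 ≤ x) (hxy : x < y) :
    exp (digamma y) - y < exp (digamma x) - x := by
  have := qg_pos_of_anti (fun n => (exp (digamma (x+n)) - (x+n)) - (exp (digamma (y+n)) - (y+n)))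
    2 x (by linarith) ?_ ?_
  · simp only [Nat.cast_zero, add_zero] at this
    linarith
  · intro n
    have hn : (0:ℝ) ≤ n := n.cast_nonneg
    have h1 := qg_exp_rec (z := y+n) (by linarith)
    have h2 := qg_exp_rec (z := x+n) (by linarith)
    have h3 := exp_lt_exp.2 (qg_K_mono (x := x+n) (y := y+n) (by linarith) (by linarith))
    push_cast
    rw [← add_assoc x n 1, ← add_assoc y n 1]
    linarith
  · intro n
    have hn : (0:ℝ) ≤ n := n.cast_nonneg
    have h1 := abs_le.1 (qg_exp_bound (z := y+n) (by linarith))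
    have h2 := abs_le.1 (qg_exp_bound (z := x+n) (by linarith))
    have h3 : 1/(y+n) ≤ 1/(x+n) := one_div_le_one_div_of_le (by linarith) (by linarith)
    have e2 : 2/(x+n) = 2*(1/(x+n)) := by ring
    rw [e2, abs_le]
    constructor <;> linarith [h1.1, h1.2, h2.1, h2.2]

theorem qi_guo_digamma_bounds (x : ℝ) (hx : 0 < x) :
    Real.log (x + 1/2) - 1/x < digamma x ∧
    digamma x < Real.log (x + Real.exp (-Real.eulerMascheroniConstant)) - 1/x := by
  have hr := qg_rec hx
  constructor
  · have := qg_lower hx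
    linarith
  · have h := qg_exp_lt (x := 1) (y := x+1) le_rfl (by linarith)
    rw [qg_one] at h
    have : digamma (x+1) < log (x + exp (-eulerMascheroniConstant)) := by
      rw [lt_log_iff_exp_lt (by positivity)]
      linarith
    linarith
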